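/- Every supersymmetric polynomial in the normalised Jucys-Murphy elements N_1,...,N_r lies in the center of the partition algebra A_r(δ), for arbitrary δ ∈ ℂ. -/

import Mathlib

open MvPolynomial

/-- A polynomial `p ∈ ℂ[x₁,…,x_r]` (variables indexed by `1,…,r ⊆ ℕ`) is
*supersymmetric* if it is symmetric separately in the odd-indexed and the
even-indexed variables, and satisfies the cancellation property: substituting
`x₁ = y`, `x₂ = -y` yields a polynomial independent of `y`. -/
def IsSupersymmetric (r : ℕ) (p : MvPolynomial ℕ ℂ) : Prop :=
  p ∈ MvPolynomial.supported ℂ (Set.Icc 1 r) ∧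
  (∀ π : Equiv.Perm ℕ, (∀ i, π i % 2 = i % 2) → (∀ i, i ∉ Set.Icc 1 r → π i = i) →
      rename π p = p) ∧
  (∀ y y' : ℂ,
    bind₁ (fun i => if i = 1 then C y else if i = 2 then C (-y) else X i) p =
      bind₁ (fun i => if i = 1 then C y' else if i = 2 then C (-y') else X i) p)

/-- Evaluation of a multivariate polynomial at a family of pairwise-commuting
elements of a (possibly noncommutative) ring. -/
noncomputable def mvEvalAt {A : Type*} [Ring A] [Algebra ℂ A]
    (N : ℕ → A) (p : MvPolynomial ℕ ℂ) : A :=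
  ∑ m ∈ p.support,
    p.coeff m • ((m.support.sort (· ≤ ·)).map (fun i => N i ^ m i)).prod

/-- Data presenting the partition algebra `A_r(δ)`: a `ℂ`-algebra generated by the
elements `e i` and `s i`, together with Enyang's elements `σ i` and the
Jucys–Murphy elements `L i` (with normalisations `N i = L i - δ/2`), satisfying
the relations of Enyang used in the paper. -/
structure PartitionAlgebraData (A : Type*) [Ring A] [Algebra ℂ A] (δ : ℂ) (r : ℕ) where
  e : ℕ → A
  σ : ℕ → A
  s : ℕ → A
  L : ℕ → A
  N : ℕ → A
  N_def : ∀ j, N j = L j - algebraMap ℂ A (δ / 2)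
  gen : Algebra.adjoin ℂ
      ({a | ∃ i, 1 ≤ i ∧ i ≤ r - 1 ∧ a = e i} ∪
        {a | ∃ i, 1 ≤ i ∧ 2 * i ≤ r - 2 ∧ a = s i}) = ⊤
  L_comm : ∀ i j, L i * L j = L j * L i
  e_comm_N : ∀ i j, 1 ≤ i → i ≤ r - 1 → j ≠ i → j ≠ i + 1 → e i * N j = N j * e i
  s_comm_N : ∀ i j, 1 ≤ i → 2 * i ≤ r - 2 →
    j ≠ 2 * i - 1 → j ≠ 2 * i → j ≠ 2 * i + 1 → j ≠ 2 * i + 2 → s i * N j = N j * s i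
  σodd_comm_N : ∀ i j, 2 ≤ 2 * i + 1 → 2 * i + 1 ≤ r - 1 →
    j ≠ 2 * i → j ≠ 2 * i + 1 → j ≠ 2 * i + 2 → σ (2 * i + 1) * N j = N j * σ (2 * i + 1)
  σeven_comm_N : ∀ i j, 2 ≤ 2 * i → 2 * i ≤ r - 1 →
    j ≠ 2 * i - 1 → j ≠ 2 * i → j ≠ 2 * i + 1 → σ (2 * i) * N j = N j * σ (2 * i)
  σ_sq : ∀ i, 2 ≤ i → i ≤ r - 1 → σ i * σ i = 1
  σσ_s : ∀ i, 2 ≤ 2 * i → 2 * i + 1 ≤ r - 1 →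
    σ (2 * i) * σ (2 * i + 1) = s i ∧ σ (2 * i + 1) * σ (2 * i) = s i
  σ_e_even : ∀ i, 2 ≤ 2 * i → 2 * i ≤ r - 1 →
    σ (2 * i) * e (2 * i) = e (2 * i) ∧ e (2 * i) * σ (2 * i) = e (2 * i)
  σ_e_odd : ∀ i, 2 * i + 1 ≤ r - 1 → 1 ≤ 2 * i →
    σ (2 * i + 1) * e (2 * i) = e (2 * i) ∧ e (2 * i) * σ (2 * i + 1) = e (2 * i)
  e_N_anti : ∀ i, 1 ≤ i → i ≤ r - 1 →
    e i * N i = -(e i * N (i + 1)) ∧ N i * e i = -(N (i + 1) * e i)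
  mixed_even : ∀ i, 1 ≤ i → 2 * i ≤ r - 1 →
    σ (2 * i) * e (2 * i - 1) * e (2 * i) = L (2 * i) * e (2 * i) ∧
    e (2 * i) * e (2 * i - 1) * σ (2 * i) = e (2 * i) * L (2 * i)
  mixed_odd : ∀ i, 1 ≤ i → 2 * i + 1 ≤ r - 1 →
    σ (2 * i + 1) * e (2 * i + 1) * e (2 * i) = L (2 * i) * e (2 * i) ∧
    e (2 * i) * e (2 * i + 1) * σ (2 * i + 1) = e (2 * i) * L (2 * i)
  cox_odd : ∀ i, 1 ≤ i → 2 * i + 1 ≤ r - 1 →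
    N (2 * i + 1) = s i * N (2 * i - 1) * s i - σ (2 * i) * e (2 * i - 1) * e (2 * i)
      - e (2 * i) * e (2 * i - 1) * σ (2 * i)
      + e (2 * i) * e (2 * i - 1) * σ (2 * i) * e (2 * i - 1) * e (2 * i) + σ (2 * i)
  cox_even : ∀ i, 1 ≤ i → 2 * i + 2 ≤ r →
    N (2 * i + 2) = s i * N (2 * i) * s i - σ (2 * i + 1) * e (2 * i - 1) * e (2 * i)
      - e (2 * i) * e (2 * i - 1) * σ (2 * i + 1)
      + e (2 * i) * e (2 * i + 1) * σ (2 * i + 1) * e (2 * i + 1) * e (2 * i)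
      + σ (2 * i + 1)

/-!
Supersymmetry gives the cancellation property for every pair of variables of opposite parity.
As `e_j` kills `N_j + N_{j+1}` from both sides and commutes with the other `N_k`, it commutes with
`p(N)`, which modulo `N_j + N_{j+1}` is a polynomial in those other `N_k`.

For `s_i = σ_{2i} σ_{2i+1}` it suffices to treat the two factors. Put `x, y, z` for
`N_{2i-1}, N_{2i}, N_{2i+1}`. Then `p = q + t (x + y) (y + z)`, where `q` is a polynomial in
`x + y + z` and the other variables, and `t` is symmetric in `x, z`. The element `σ_{2i}` swaps
`x` and `z` and fixes `y` as a generator of a degenerate affine Hecke algebra would, up to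
corrections annihilated by `(x + y) (y + z)`. This makes `x + y + z`, `(x + y) (y + z)` and
`y (x + y) (y + z)`, and hence `p(N)`, commute with `σ_{2i}`.
The same argument applies to `-σ_{2i+1}` with `x, y, z` equal to `N_{2i+2}, N_{2i+1}, N_{2i}`.
-/

section LinearDivisors

variable {ι R : Type*}

theorem dvd_aeval_sub_aeval {B : Type*} [CommSemiring R] [CommRing B] [Algebra R B] {d : B}
    {f g : ι → B} (h : ∀ i, d ∣ f i - g i) (p : MvPolynomial ι R) :
    d ∣ aeval f p - aeval g p := by
  induction p using MvPolynomial.induction_on with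
  | C a => simp
  | add p q hp hq => simpa only [map_add, add_sub_add_comm] using dvd_add hp hq
  | mul_X p i hp =>
    have hsplit : aeval f p * f i - aeval g p * g i =
        (aeval f p - aeval g p) * f i + aeval g p * (f i - g i) := by ring
    simpa only [map_mul, aeval_X, hsplit] using
      dvd_add (hp.mul_right (f i)) ((h i).mul_left (aeval g p))

variable [CommRing R] {j k l : ι}

theorem X_add_X_dvd_iff [DecidableEq ι] (hjk : j ≠ k) {p : MvPolynomial ι R} :
    X j + X k ∣ p ↔ aeval (Function.update X j (-X k : MvPolynomial ι R)) p = 0 := by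
  constructor
  · rintro ⟨t, rfl⟩
    simp [Function.update_of_ne hjk.symm]
  · intro hp
    have hcongr (i : ι) :
        X j + X k ∣ (X i : MvPolynomial ι R) - Function.update X j (-X k) i := by
      obtain rfl | hij := eq_or_ne i j
      · simp
      · simp [Function.update_of_ne hij]
    simpa only [aeval_X_left_apply, hp, sub_zero] using dvd_aeval_sub_aeval hcongr p

theorem X_add_X_ne_zero [Nontrivial R] (hjk : j ≠ k) : (X j + X k : MvPolynomial ι R) ≠ 0 := by
  classical
  intro h
  simpa [hjk.symm] using congrArg (eval (Pi.single j (1 : R))) h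

theorem prime_X_add_X [IsDomain R] (hjk : j ≠ k) : Prime (X j + X k : MvPolynomial ι R) := by
  classical
  refine ⟨X_add_X_ne_zero hjk, fun hunit => ?_, fun p q => ?_⟩
  · simpa using (hunit.map (eval (0 : ι → R))).ne_zero
  · simp only [X_add_X_dvd_iff hjk, map_mul, mul_eq_zero, imp_self]

theorem not_X_add_X_dvd_X_add_X [Nontrivial R] (hjk : j ≠ k) (hjl : j ≠ l) (hkl : k ≠ l) :
    ¬(X k + X l ∣ (X j + X k : MvPolynomial ι R)) := by
  classical
  rw [X_add_X_dvd_iff hkl, map_add, aeval_X, aeval_X, Function.update_self,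
    Function.update_of_ne hjk, add_neg_eq_zero]
  exact fun h => hjl (X_injective h)

end LinearDivisors

section Cancellation

variable {ι R : Type*} [DecidableEq ι] [CommRing R] {j k l : ι} {p : MvPolynomial ι R}

/-- The substitution `x_j = x_k = 0`. -/
noncomputable def eraseVars (j k : ι) : MvPolynomial ι R →ₐ[R] MvPolynomial ι R :=
  aeval fun i => if i = j ∨ i = k then 0 else X i

/-- The cancellation property in the variables `x_j` and `x_k`: modulo `x_j + x_k`, that is after
setting `x_k = -x_j`, the polynomial `p` does not depend on these two variables. -/
def CancelsAt (j k : ι) (p : MvPolynomial ι R) : Prop :=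
  X j + X k ∣ p - eraseVars j k p

theorem CancelsAt.symm (h : CancelsAt j k p) : CancelsAt k j p := by
  simpa only [CancelsAt, eraseVars, or_comm, add_comm] using h

theorem CancelsAt.rename (h : CancelsAt j k p) (π : Equiv.Perm ι) :
    CancelsAt (π j) (π k) (rename π p) := by
  have herase : MvPolynomial.rename π (eraseVars j k p) =
      eraseVars (π j) (π k) (MvPolynomial.rename π p) := by
    rw [eraseVars, eraseVars, aeval_rename, ← AlgHom.comp_apply, comp_aeval]
    congr 2
    funext i
    simp [apply_ite (MvPolynomial.rename π)]
  simpa only [CancelsAt, map_sub, map_add, rename_X, herase] using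
    map_dvd (MvPolynomial.rename π) h

/-- The substitution `x_j = x_k = 0`, `x_l = x_j + x_k + x_l`. It computes the residue modulo
`(x_j + x_k)(x_k + x_l)` of a polynomial that is supersymmetric in `x_j, x_l` against `x_k`. -/
noncomputable def collapse (j k l : ι) : MvPolynomial ι R →ₐ[R] MvPolynomial ι R :=
  aeval fun i => if i = j ∨ i = k then 0 else if i = l then X j + X k + X l else X i

theorem rename_swap_collapse (hjk : j ≠ k) (hkl : k ≠ l) (p : MvPolynomial ι R) :
    rename (Equiv.swap j l) (collapse j k l p) = collapse j k l p := by
  rw [collapse, ← AlgHom.comp_apply, comp_aeval]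
  congr 2
  funext i
  split_ifs with hi hil
  · exact map_zero _
  · simp only [map_add, rename_X, Equiv.swap_apply_left, Equiv.swap_apply_right,
      Equiv.swap_apply_of_ne_of_ne hjk.symm hkl]
    ring
  · rw [not_or] at hi
    rw [rename_X, Equiv.swap_apply_of_ne_of_ne hi.1 hil]

theorem CancelsAt.X_add_X_dvd_sub_collapse (h : CancelsAt j k p) (l : ι) :
    X j + X k ∣ p - collapse j k l p := by
  have hcongr (i : ι) : X j + X k ∣ (if i = j ∨ i = k then 0 else X i : MvPolynomial ι R) -
      if i = j ∨ i = k then 0 else if i = l then X j + X k + X l else X i := by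
    split_ifs with hi hil
    · simp
    · exact ⟨-1, by rw [hil]; ring⟩
    · simp
  simpa only [CancelsAt, eraseVars, collapse, sub_add_sub_cancel] using
    dvd_add h (dvd_aeval_sub_aeval hcongr p)

theorem CancelsAt.exists_eq_collapse_add_mul [IsDomain R] (hjk : j ≠ k) (hjl : j ≠ l)
    (hkl : k ≠ l) (hsymm : MvPolynomial.rename (Equiv.swap j l) p = p) (h : CancelsAt j k p) :
    ∃ t, MvPolynomial.rename (Equiv.swap j l) t = t ∧
      p = collapse j k l p + t * ((X j + X k) * (X k + X l)) := by
  have hk : Equiv.swap j l k = k := Equiv.swap_apply_of_ne_of_ne hjk.symm hkl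
  have hjk_dvd := h.X_add_X_dvd_sub_collapse l
  have hkl_dvd : X k + X l ∣ p - collapse j k l p := by
    have := map_dvd (MvPolynomial.rename (Equiv.swap j l)) hjk_dvd
    rwa [map_sub, map_add, rename_X, rename_X, hsymm, rename_swap_collapse hjk hkl,
      Equiv.swap_apply_left, hk, add_comm] at this
  obtain ⟨w, hw⟩ := hjk_dvd
  obtain ⟨t, rfl⟩ : X k + X l ∣ w :=
    ((prime_X_add_X hkl).dvd_or_dvd (hw ▸ hkl_dvd)).resolve_left
      (not_X_add_X_dvd_X_add_X hjk hjl hkl)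
  have hp : p = collapse j k l p + t * ((X j + X k) * (X k + X l)) := by linear_combination hw
  refine ⟨t, ?_, hp⟩
  have hrename := congrArg (MvPolynomial.rename (Equiv.swap j l)) hp
  simp only [hsymm, map_add, map_mul, rename_swap_collapse hjk hkl, rename_X,
    Equiv.swap_apply_left, Equiv.swap_apply_right, hk] at hrename
  refine mul_right_cancel₀ (mul_ne_zero (X_add_X_ne_zero hjk) (X_add_X_ne_zero hkl)) ?_
  linear_combination hp - hrename

end Cancellation

section SwapInvariants

variable {ι R : Type*} [CommRing R] {j l : ι}

/-- The subalgebra generated by the elementary symmetric polynomials in `x_j, x_l` and by all the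
other variables. -/
noncomputable def swapInvariants (R : Type*) [CommRing R] (j l : ι) :
    Subalgebra R (MvPolynomial ι R) :=
  Algebra.adjoin R (X '' {j, l}ᶜ ∪ {X j + X l, X j * X l})

theorem rename_swap_of_mem_swapInvariants [DecidableEq ι] {p : MvPolynomial ι R}
    (hp : p ∈ swapInvariants R j l) : rename (Equiv.swap j l) p = p := by
  suffices swapInvariants R j l ≤
      AlgHom.equalizer (rename (R := R) (Equiv.swap j l)) (AlgHom.id R _) from this hp
  refine Algebra.adjoin_le ?_
  rintro _ (⟨i, hi, rfl⟩ | rfl | rfl)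
  · simp only [Set.mem_compl_iff, Set.mem_insert_iff, Set.mem_singleton_iff, not_or] at hi
    simp [Equiv.swap_apply_of_ne_of_ne hi.1 hi.2]
  · simp [add_comm]
  · simp [mul_comm]

theorem exists_eq_add_X_mul_of_swapInvariants (j l : ι) (p : MvPolynomial ι R) :
    ∃ u ∈ swapInvariants R j l, ∃ v ∈ swapInvariants R j l, p = u + X j * v := by
  have hadd : X j + X l ∈ swapInvariants R j l := Algebra.subset_adjoin (by simp)
  have hmul : X j * X l ∈ swapInvariants R j l := Algebra.subset_adjoin (by simp)
  induction p using MvPolynomial.induction_on with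
  | C a => exact ⟨C a, Subalgebra.algebraMap_mem _ a, 0, zero_mem _, by simp⟩
  | add p q hp hq =>
    obtain ⟨u, hu, v, hv, rfl⟩ := hp
    obtain ⟨u', hu', v', hv', rfl⟩ := hq
    exact ⟨u + u', add_mem hu hu', v + v', add_mem hv hv', by ring⟩
  | mul_X p i hp =>
    obtain ⟨u, hu, v, hv, rfl⟩ := hp
    by_cases hij : i = j
    · subst hij
      exact ⟨-(X i * X l * v), neg_mem (mul_mem hmul hv), u + (X i + X l) * v,
        add_mem hu (mul_mem hadd hv), by ring⟩
    by_cases hil : i = l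
    · subst hil
      exact ⟨(X j + X i) * u + X j * X i * v, add_mem (mul_mem hadd hu) (mul_mem hmul hv),
        -u, neg_mem hu, by ring⟩
    · have hi : X i ∈ swapInvariants R j l :=
        Algebra.subset_adjoin (.inl ⟨i, by simp [hij, hil], rfl⟩)
      exact ⟨u * X i, mul_mem hu hi, v * X i, mul_mem hv hi, by ring⟩

theorem mem_swapInvariants_iff [DecidableEq ι] [IsDomain R] (hjl : j ≠ l)
    {p : MvPolynomial ι R} : p ∈ swapInvariants R j l ↔ rename (Equiv.swap j l) p = p := by
  refine ⟨rename_swap_of_mem_swapInvariants, fun hp => ?_⟩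
  obtain ⟨u, hu, v, hv, rfl⟩ := exists_eq_add_X_mul_of_swapInvariants j l p
  rw [map_add, map_mul, rename_swap_of_mem_swapInvariants hu,
    rename_swap_of_mem_swapInvariants hv, rename_X, Equiv.swap_apply_left] at hp
  have hv_zero : v = 0 := by
    refine (mul_eq_zero.1 (?_ : (X l - X j) * v = 0)).resolve_left
      (sub_ne_zero.2 fun h => hjl (X_injective h).symm)
    linear_combination hp
  simpa [hv_zero] using hu

end SwapInvariants

namespace IsSupersymmetric

variable {r j k : ℕ} {p : MvPolynomial ℕ ℂ}

theorem rename_swap (hp : IsSupersymmetric r p) (hj : j ∈ Set.Icc 1 r) (hk : k ∈ Set.Icc 1 r)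
    (hjk : j % 2 = k % 2) : rename (Equiv.swap j k) p = p := by
  refine hp.2.1 _ (fun i => ?_) fun i hi => ?_
  · rw [Equiv.swap_apply_def]
    split_ifs <;> simp [*]
  · exact Equiv.swap_apply_of_ne_of_ne (ne_of_mem_of_not_mem hj hi).symm
      (ne_of_mem_of_not_mem hk hi).symm

theorem cancelsAt_one_two (hp : IsSupersymmetric r p) : CancelsAt 1 2 p := by
  -- At a point `v`, setting `x₁ = -x₂` amounts to the scalar substitution with `y = -v 2`.
  have heval (v : ℕ → ℂ) : eval v (aeval (Function.update X 1 (-X 2 : MvPolynomial ℕ ℂ)) p) =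
      eval v (eraseVars 1 2 p) := by
    have hv := congrArg (eval v) (hp.2.2 (-v 2) 0)
    simp only [← coe_aeval_eq_eval, RingHom.coe_coe, bind₁, ← AlgHom.comp_apply, comp_aeval,
      eraseVars] at hv ⊢
    convert hv using 3
    · funext i
      by_cases h1 : i = 1 <;> by_cases h2 : i = 2 <;> simp [h1, h2]
    · funext i
      by_cases h1 : i = 1 <;> by_cases h2 : i = 2 <;> simp [h1, h2]
  have herase : aeval (Function.update X 1 (-X 2 : MvPolynomial ℕ ℂ)) (eraseVars 1 2 p) =
      eraseVars 1 2 p := by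
    rw [eraseVars, ← AlgHom.comp_apply, comp_aeval]
    congr 2
    funext i
    split_ifs with hi
    · exact map_zero _
    · rw [aeval_X, Function.update_of_ne (not_or.1 hi).1]
  rw [CancelsAt, X_add_X_dvd_iff (by decide), map_sub, herase, sub_eq_zero]
  exact MvPolynomial.funext heval

theorem cancelsAt (hp : IsSupersymmetric r p) (hj : j ∈ Set.Icc 1 r) (hk : k ∈ Set.Icc 1 r)
    (hjk : j % 2 ≠ k % 2) : CancelsAt j k p := by
  wlog hodd : j % 2 = 1 generalizing j k
  · exact (this hk hj hjk.symm (by lia)).symm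
  rw [Set.mem_Icc] at hj hk
  have hj2 := (hp.cancelsAt_one_two).rename (Equiv.swap 1 j)
  rw [hp.rename_swap ⟨by lia, by lia⟩ ⟨by lia, by lia⟩ (by lia), Equiv.swap_apply_left,
    Equiv.swap_apply_of_ne_of_ne (by lia) (by lia)] at hj2
  have hjk' := hj2.rename (Equiv.swap 2 k)
  rwa [hp.rename_swap ⟨by lia, by lia⟩ ⟨by lia, by lia⟩ (by lia), Equiv.swap_apply_left,
    Equiv.swap_apply_of_ne_of_ne (by lia) (by lia)] at hjk'

end IsSupersymmetric

section CommutingElements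

variable {ι R A : Type*} [CommRing R] [Ring A] [Algebra R A] {φ : MvPolynomial ι R →ₐ[R] A}

open scoped IsMulCommutative in
theorem exists_algHom_map_X {N : ι → A} (hN : ∀ i j, Commute (N i) (N j)) :
    ∃ φ : MvPolynomial ι R →ₐ[R] A, ∀ i, φ (X i) = N i := by
  have : IsMulCommutative (Algebra.adjoin R (Set.range N)) :=
    Algebra.isMulCommutative_adjoin R (by rintro _ ⟨i, rfl⟩ _ ⟨j, rfl⟩; exact hN i j)
  refine ⟨(Algebra.adjoin R (Set.range N)).val.comp
    (aeval fun i => ⟨N i, Algebra.subset_adjoin ⟨i, rfl⟩⟩), fun i => ?_⟩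
  simp

theorem mvEvalAt_eq_map {A : Type*} [Ring A] [Algebra ℂ A] {φ : MvPolynomial ℕ ℂ →ₐ[ℂ] A}
    {N : ℕ → A} (hφ : ∀ i, φ (X i) = N i) (p : MvPolynomial ℕ ℂ) : mvEvalAt N p = φ p := by
  have hmonomial (m : ℕ →₀ ℕ) : monomial m (1 : ℂ) =
      ((m.support.sort (· ≤ ·)).map fun i => X i ^ m i).prod := by
    rw [monomial_eq, C_1, one_mul, Finsupp.prod, ← Finset.prod_map_toList]
    exact ((Finset.sort_perm_toList _ _).symm.map _).prod_eq
  conv_rhs => rw [p.as_sum, map_sum]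
  refine Finset.sum_congr rfl fun m _ => ?_
  rw [← mul_one (coeff m p), ← smul_eq_mul, ← smul_monomial, map_smul, hmonomial,
    map_list_prod, List.map_map, smul_eq_mul, mul_one]
  simp only [Function.comp_def, map_pow, hφ]

theorem commute_map_of_commute_map_X {a : A} (h : ∀ i, Commute a (φ (X i)))
    (p : MvPolynomial ι R) : Commute a (φ p) := by
  induction p using MvPolynomial.induction_on with
  | C c =>
    rw [← algebraMap_eq, φ.commutes]
    exact Algebra.commute_algebraMap_right c a
  | add p q hp hq => exact map_add φ p q ▸ hp.add_right hq
  | mul_X p i hp => exact map_mul φ p (X i) ▸ hp.mul_right (h i)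

theorem CancelsAt.commute_map [DecidableEq ι] {j k : ι} {p : MvPolynomial ι R} {e : A}
    (hp : CancelsAt j k p) (he : ∀ i, i ≠ j → i ≠ k → Commute e (φ (X i)))
    (he_mul : e * φ (X j + X k) = 0) (hmul_e : φ (X j + X k) * e = 0) : Commute e (φ p) := by
  have herase : Commute e (φ (eraseVars j k p)) := by
    refine commute_map_of_commute_map_X (φ := φ.comp (eraseVars j k)) (fun i => ?_) p
    rw [AlgHom.comp_apply, eraseVars, aeval_X]
    split_ifs with hi
    · simp
    · exact he i (not_or.1 hi).1 (not_or.1 hi).2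
  obtain ⟨t, ht⟩ := hp
  have hdvd : Commute e (φ ((X j + X k) * t)) := by
    rw [commute_iff_eq, map_mul, ← mul_assoc, he_mul, zero_mul, ← map_mul, mul_comm, map_mul,
      mul_assoc, hmul_e, mul_zero]
  rw [sub_eq_iff_eq_add.1 ht, map_add]
  exact hdvd.add_right herase

/-- The multipliers `t` for which `φ (t * κ)` still commutes with `a`, where `φ κ` does. They form
a subalgebra because they are the `t` whose commutator with `a` is annihilated by `φ κ`. -/
def commutingMultipliers {B : Type*} [CommRing B] [Algebra R B] (φ : B →ₐ[R] A) {a : A} {κ : B}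
    (hκ : Commute a (φ κ)) : Subalgebra R B where
  carrier := {t | Commute a (φ (t * κ))}
  mul_mem' {t u} ht hu := by
    calc a * φ (t * u * κ) = a * φ (t * κ) * φ u := by
          rw [mul_assoc a, ← map_mul, mul_right_comm]
      _ = φ t * (φ κ * a) * φ u := by rw [ht.eq, map_mul]; simp only [mul_assoc]
      _ = φ t * (a * φ (u * κ)) := by rw [← hκ.eq, mul_comm u, map_mul]; simp only [mul_assoc]
      _ = φ (t * u * κ) * a := by rw [hu.eq, ← mul_assoc, ← map_mul, mul_assoc t]
  add_mem' {t u} ht hu := by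
    simpa only [Set.mem_ofPred_eq, add_mul, map_add] using Commute.add_right ht hu
  algebraMap_mem' c := by
    simpa only [Set.mem_ofPred_eq, map_mul, φ.commutes] using
      (Algebra.commute_algebraMap_right c a).mul_right hκ

theorem mem_commutingMultipliers {B : Type*} [CommRing B] [Algebra R B] {φ : B →ₐ[R] A} {a : A}
    {κ t : B} {hκ : Commute a (φ κ)} :
    t ∈ commutingMultipliers φ hκ ↔ Commute a (φ (t * κ)) :=
  Iff.rfl

variable [IsDomain R] [DecidableEq ι] {j k l : ι} {p : MvPolynomial ι R} {σ : A}

theorem commute_map_mul_of_rename_swap_eq {t : MvPolynomial ι R} (hjl : j ≠ l)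
    (ht : rename (Equiv.swap j l) t = t)
    (hσ : ∀ i, i ≠ j → i ≠ k → i ≠ l → Commute σ (φ (X i)))
    (hsum : Commute σ (φ (X j + X k + X l)))
    (hprod : Commute σ (φ ((X j + X k) * (X k + X l))))
    (hmul_prod : Commute σ (φ (X k * ((X j + X k) * (X k + X l))))) :
    Commute σ (φ (t * ((X j + X k) * (X k + X l)))) := by
  have hle : swapInvariants R j l ≤ commutingMultipliers φ hprod := by
    refine Algebra.adjoin_le ?_
    rintro _ (⟨i, hi, rfl⟩ | rfl | rfl) <;> rw [SetLike.mem_coe, mem_commutingMultipliers]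
    · simp only [Set.mem_compl_iff, Set.mem_insert_iff, Set.mem_singleton_iff, not_or] at hi
      obtain rfl | hik := eq_or_ne i k
      · exact hmul_prod
      · exact map_mul φ (X i) _ ▸ (hσ i hi.1 hik hi.2).mul_right hprod
    · have hsplit : (X j + X l) * ((X j + X k) * (X k + X l)) =
          (X j + X k + X l) * ((X j + X k) * (X k + X l)) -
            X k * ((X j + X k) * (X k + X l) : MvPolynomial ι R) := by ring
      rw [hsplit, map_sub, map_mul φ (X j + X k + X l)]
      exact (hsum.mul_right hprod).sub_right hmul_prod
    · have hsplit : X j * X l * ((X j + X k) * (X k + X l)) =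
          (X j + X k) * (X k + X l) * ((X j + X k) * (X k + X l)) -
            (X j + X k + X l) * (X k * ((X j + X k) * (X k + X l)) : MvPolynomial ι R) := by
        ring
      rw [hsplit, map_sub, map_mul φ (X j + X k + X l), map_mul φ (_ * _) (_ * _)]
      exact (hprod.mul_right hprod).sub_right (hsum.mul_right hmul_prod)
  exact hle ((mem_swapInvariants_iff hjl).2 ht)

theorem CancelsAt.commute_map_of_rename_swap_eq (hp : CancelsAt j k p) (hjk : j ≠ k) (hjl : j ≠ l)
    (hkl : k ≠ l) (hsymm : MvPolynomial.rename (Equiv.swap j l) p = p)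
    (hσ : ∀ i, i ≠ j → i ≠ k → i ≠ l → Commute σ (φ (X i)))
    (hsum : Commute σ (φ (X j + X k + X l)))
    (hprod : Commute σ (φ ((X j + X k) * (X k + X l))))
    (hmul_prod : Commute σ (φ (X k * ((X j + X k) * (X k + X l))))) : Commute σ (φ p) := by
  have hcollapse : Commute σ (φ (collapse j k l p)) := by
    refine commute_map_of_commute_map_X (φ := φ.comp (collapse j k l)) (fun i => ?_) p
    rw [AlgHom.comp_apply, collapse, aeval_X]
    split_ifs with hi hil
    · simp
    · exact hsum
    · exact hσ i (not_or.1 hi).1 (not_or.1 hi).2 hil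
  obtain ⟨t, ht, hpt⟩ := hp.exists_eq_collapse_add_mul hjk hjl hkl hsymm
  rw [hpt, map_add]
  exact hcollapse.add_right
    (commute_map_mul_of_rename_swap_eq hjl ht hσ hsum hprod hmul_prod)

end CommutingElements

section TwistedSwap

variable {A : Type*} [Ring A]

/-- Up to corrections involving `e`, `f` and `ℓ`, conjugation by `σ` exchanges `x` and `z` and
fixes `y`. These are the relations in `A_r(δ)` between `σ = σ_{2i}`, the Jucys–Murphy elements
`x, y, z = N_{2i-1}, N_{2i}, N_{2i+1}`, `e = e_{2i}`, `f = e_{2i-1}` and `ℓ = L_{2i}`. -/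
structure IsTwistedSwap (σ x y z e f ℓ : A) : Prop where
  commute_x_y : Commute x y
  commute_x_z : Commute x z
  commute_y_z : Commute y z
  commute_ℓ_x : Commute ℓ x
  commute_ℓ_y : Commute ℓ y
  commute_ℓ_z : Commute ℓ z
  commute_e_x : Commute e x
  commute_f_z : Commute f z
  e_mul_y_add_z : e * (y + z) = 0
  f_mul_x_add_y : f * (x + y) = 0
  x_add_y_mul_f : (x + y) * f = 0
  commute_eℓfe_x : Commute (e * ℓ * f * e) x
  σ_mul_y : σ * y = y * σ + f * e + e * ℓ - ℓ * e - e * f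
  σ_mul_z : σ * z = x * σ + 1 - f * e - e * ℓ + e * ℓ * f * e
  z_mul_σ : z * σ = σ * x + 1 - ℓ * e - e * f + e * ℓ * f * e

namespace IsTwistedSwap

variable {σ x y z e f ℓ : A}

theorem commute_add_add (h : IsTwistedSwap σ x y z e f ℓ) : Commute σ (x + y + z) := by
  rw [commute_iff_eq]
  linear_combination (norm := noncomm_ring) h.σ_mul_y + h.σ_mul_z - h.z_mul_σ

theorem e_mul_ℓ_mul_y_add_z (h : IsTwistedSwap σ x y z e f ℓ) : e * ℓ * (y + z) = 0 := by
  rw [mul_assoc, (h.commute_ℓ_y.add_right h.commute_ℓ_z).eq, ← mul_assoc, h.e_mul_y_add_z,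
    zero_mul]

theorem e_mul_f_mul_z (h : IsTwistedSwap σ x y z e f ℓ) : e * f * z = x * e * f := by
  linear_combination (norm := noncomm_ring) e * h.commute_f_z.eq + h.e_mul_y_add_z * f
    - e * h.x_add_y_mul_f + h.commute_e_x.eq * f

theorem commute_mul (h : IsTwistedSwap σ x y z e f ℓ) : Commute σ ((x + y) * (y + z)) := by
  have hK : (x + y) * (y + z) = y * (x + y + z) + x * z := by
    linear_combination (norm := noncomm_ring) h.commute_x_y.eq
  have hℓe : ℓ * e * x = x * ℓ * e := by
    rw [mul_assoc, h.commute_e_x.eq, ← mul_assoc, h.commute_ℓ_x.eq]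
  have hcorrections :
      (f * e + e * ℓ - ℓ * e - e * f) * (x + y + z)
        + (1 - f * e - e * ℓ + e * ℓ * f * e) * x
        - x * (1 - ℓ * e - e * f + e * ℓ * f * e) = 0 := by
    linear_combination (norm := noncomm_ring) f * h.e_mul_y_add_z + h.e_mul_ℓ_mul_y_add_z
      - ℓ * h.e_mul_y_add_z - e * h.f_mul_x_add_y - hℓe - h.e_mul_f_mul_z + h.commute_eℓfe_x.eq
  rw [hK, commute_iff_eq]
  linear_combination (norm := noncomm_ring) h.σ_mul_y * (x + y + z) + y * h.commute_add_add.eq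
    + σ * h.commute_x_z.eq + h.σ_mul_z * x - x * h.z_mul_σ + hcorrections

theorem commute_y_mul_mul (h : IsTwistedSwap σ x y z e f ℓ) :
    Commute σ (y * ((x + y) * (y + z))) := by
  have hcomm : Commute (x + y) (y + z) :=
    (h.commute_x_y.add_right h.commute_x_z).add_left (.add_right (.refl y) h.commute_y_z)
  have hf : f * ((x + y) * (y + z)) = 0 := by rw [← mul_assoc, h.f_mul_x_add_y, zero_mul]
  have he : e * ((x + y) * (y + z)) = 0 := by
    rw [hcomm.eq, ← mul_assoc, h.e_mul_y_add_z, zero_mul]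
  have heℓ : e * ℓ * ((x + y) * (y + z)) = 0 := by
    rw [hcomm.eq, ← mul_assoc, h.e_mul_ℓ_mul_y_add_z, zero_mul]
  rw [commute_iff_eq]
  linear_combination (norm := noncomm_ring) h.σ_mul_y * ((x + y) * (y + z)) + f * he + heℓ
    - ℓ * he - e * hf + y * h.commute_mul.eq

end IsTwistedSwap

theorem commute_sandwich {b ℓ x e f : A} (hcentral : ∀ a, Commute (ℓ - b) a) (hex : Commute e x)
    (hfe : f * x * e = f * b * e) (hef : e * x * f = e * b * f)
    (hflip : e * ℓ * f * e = e * f * ℓ * e) : Commute (e * ℓ * f * e) x := by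
  have hflip_b : e * b * f * e = e * f * b * e := by
    linear_combination (norm := noncomm_ring) hflip - e * (hcentral f).eq * e
  calc e * ℓ * f * e * x = e * ℓ * (f * x * e) := by simp only [mul_assoc, hex.eq]
    _ = e * ℓ * f * b * e := by rw [hfe]; simp only [mul_assoc]
    _ = e * b * f * ℓ * e := by
      linear_combination (norm := noncomm_ring) e * (hcentral (f * b * e)).eq
        - e * b * f * (hcentral e).eq - hflip_b * (ℓ - b)
    _ = e * x * f * ℓ * e := by rw [hef]
    _ = x * (e * ℓ * f * e) := by rw [hflip, hex.eq]; simp only [mul_assoc]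

end TwistedSwap

namespace PartitionAlgebraData

variable {A : Type*} [Ring A] [Algebra ℂ A] {δ : ℂ} {r i j k : ℕ} (P : PartitionAlgebraData A δ r)

section JucysMurphy

theorem commute_L_sub_N (j : ℕ) (a : A) : Commute (P.L j - P.N j) a := by
  rw [P.N_def, sub_sub_cancel]
  exact Algebra.commute_algebraMap_left _ a

theorem commute_L_N (j k : ℕ) : Commute (P.L j) (P.N k) := by
  rw [P.N_def]
  exact Commute.sub_right (P.L_comm j k) (Algebra.commute_algebraMap_right _ _)

theorem commute_N (j k : ℕ) : Commute (P.N j) (P.N k) := by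
  rw [P.N_def j]
  exact (P.commute_L_N j k).sub_left (Algebra.commute_algebraMap_left _ _)

theorem e_mul_N_add_N (hj : 1 ≤ j) (hjk : j + 1 = k) (hkr : k ≤ r) :
    P.e j * (P.N j + P.N k) = 0 := by
  rw [mul_add, (P.e_N_anti j hj (by lia)).1, hjk, neg_add_cancel]

theorem N_add_N_mul_e (hj : 1 ≤ j) (hjk : j + 1 = k) (hkr : k ≤ r) :
    (P.N j + P.N k) * P.e j = 0 := by
  rw [add_mul, (P.e_N_anti j hj (by lia)).2, hjk, neg_add_cancel]

end JucysMurphy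

section Conjugation

theorem σ_even_mul_L_mul_e (hi : 1 ≤ i) (hr : 2 * i + 1 ≤ r) :
    P.σ (2 * i) * (P.L (2 * i) * P.e (2 * i)) = P.e (2 * i - 1) * P.e (2 * i) := by
  rw [← (P.mixed_even i hi (by lia)).1, mul_assoc, ← mul_assoc, P.σ_sq _ (by lia) (by lia), one_mul]

theorem e_mul_L_mul_σ_even (hi : 1 ≤ i) (hr : 2 * i + 1 ≤ r) :
    P.e (2 * i) * P.L (2 * i) * P.σ (2 * i) = P.e (2 * i) * P.e (2 * i - 1) := by
  rw [← (P.mixed_even i hi (by lia)).2, mul_assoc, P.σ_sq _ (by lia) (by lia), mul_one]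

theorem σ_odd_mul_L_mul_e (hi : 1 ≤ i) (hr : 2 * i + 2 ≤ r) :
    P.σ (2 * i + 1) * (P.L (2 * i) * P.e (2 * i)) = P.e (2 * i + 1) * P.e (2 * i) := by
  rw [← (P.mixed_odd i hi (by lia)).1, mul_assoc, ← mul_assoc, P.σ_sq _ (by lia) (by lia), one_mul]

theorem e_mul_L_mul_σ_odd (hi : 1 ≤ i) (hr : 2 * i + 2 ≤ r) :
    P.e (2 * i) * P.L (2 * i) * P.σ (2 * i + 1) = P.e (2 * i) * P.e (2 * i + 1) := by
  rw [← (P.mixed_odd i hi (by lia)).2, mul_assoc, P.σ_sq _ (by lia) (by lia), mul_one]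

theorem σ_even_mul_s (hi : 1 ≤ i) (hr : 2 * i + 2 ≤ r) : P.σ (2 * i) * P.s i = P.σ (2 * i + 1) := by
  rw [← (P.σσ_s i (by lia) (by lia)).1, ← mul_assoc, P.σ_sq _ (by lia) (by lia), one_mul]

theorem s_mul_σ_even (hi : 1 ≤ i) (hr : 2 * i + 2 ≤ r) : P.s i * P.σ (2 * i) = P.σ (2 * i + 1) := by
  rw [← (P.σσ_s i (by lia) (by lia)).2, mul_assoc, P.σ_sq _ (by lia) (by lia), mul_one]

theorem σ_odd_mul_s (hi : 1 ≤ i) (hr : 2 * i + 2 ≤ r) : P.σ (2 * i + 1) * P.s i = P.σ (2 * i) := by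
  rw [← (P.σσ_s i (by lia) (by lia)).2, ← mul_assoc, P.σ_sq _ (by lia) (by lia), one_mul]

theorem s_mul_σ_odd (hi : 1 ≤ i) (hr : 2 * i + 2 ≤ r) : P.s i * P.σ (2 * i + 1) = P.σ (2 * i) := by
  rw [← (P.σσ_s i (by lia) (by lia)).1, mul_assoc, P.σ_sq _ (by lia) (by lia), mul_one]

theorem s_mul_e_mul_e (hi : 1 ≤ i) (hr : 2 * i + 2 ≤ r) :
    P.s i * P.e (2 * i - 1) * P.e (2 * i) = P.e (2 * i + 1) * P.e (2 * i) := by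
  rw [mul_assoc, ← P.σ_even_mul_L_mul_e hi (by lia), ← mul_assoc, P.s_mul_σ_even hi hr,
    P.σ_odd_mul_L_mul_e hi hr]

theorem e_mul_e_mul_s (hi : 1 ≤ i) (hr : 2 * i + 2 ≤ r) :
    P.e (2 * i) * P.e (2 * i - 1) * P.s i = P.e (2 * i) * P.e (2 * i + 1) := by
  rw [← P.e_mul_L_mul_σ_even hi (by lia), mul_assoc, P.σ_even_mul_s hi hr,
    P.e_mul_L_mul_σ_odd hi hr]

theorem s_conj_N_odd (hi : 1 ≤ i) (hr : 2 * i + 2 ≤ r) :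
    P.s i * P.N (2 * i - 1) * P.s i = P.σ (2 * i) * P.N (2 * i - 1) * P.σ (2 * i) := by
  nth_rewrite 1 [← (P.σσ_s i (by lia) (by lia)).1]
  rw [mul_assoc (P.σ _), P.σodd_comm_N i _ (by lia) (by lia) (by lia) (by lia) (by lia),
    mul_assoc, mul_assoc, P.σ_odd_mul_s hi hr, mul_assoc]

theorem N_odd_eq (hi : 1 ≤ i) (hr : 2 * i + 2 ≤ r) :
    P.N (2 * i + 1) = P.σ (2 * i) * P.N (2 * i - 1) * P.σ (2 * i) - P.L (2 * i) * P.e (2 * i)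
      - P.e (2 * i) * P.L (2 * i) + P.e (2 * i) * P.L (2 * i) * P.e (2 * i - 1) * P.e (2 * i)
      + P.σ (2 * i) := by
  have hmixed := P.mixed_even i hi (by lia)
  rw [P.cox_odd i hi (by lia), P.s_conj_N_odd hi hr, hmixed.1, hmixed.2]

theorem N_even_eq (hi : 1 ≤ i) (hr : 2 * i + 2 ≤ r) :
    P.N (2 * i + 2) = P.σ (2 * i + 1) * P.N (2 * i) * P.σ (2 * i + 1)
      - P.e (2 * i + 1) * P.e (2 * i) - P.e (2 * i) * P.e (2 * i + 1)
      + P.e (2 * i) * P.L (2 * i) * P.e (2 * i + 1) * P.e (2 * i) + P.σ (2 * i + 1) := by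
  have hs := P.σσ_s i (by lia) (by lia)
  have hσe := P.σ_e_even i (by lia) (by lia)
  calc P.N (2 * i + 2) = P.σ (2 * i) * P.N (2 * i + 2) * P.σ (2 * i) := by
        rw [P.σeven_comm_N i _ (by lia) (by lia) (by lia) (by lia) (by lia), mul_assoc,
          P.σ_sq _ (by lia) (by lia), mul_one]
    _ = (P.σ (2 * i) * P.s i) * P.N (2 * i) * (P.s i * P.σ (2 * i))
        - (P.σ (2 * i) * P.σ (2 * i + 1)) * P.e (2 * i - 1) * (P.e (2 * i) * P.σ (2 * i))
        - (P.σ (2 * i) * P.e (2 * i)) * P.e (2 * i - 1) * (P.σ (2 * i + 1) * P.σ (2 * i))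
        + (P.σ (2 * i) * P.e (2 * i)) * P.e (2 * i + 1) * P.σ (2 * i + 1) * P.e (2 * i + 1)
          * (P.e (2 * i) * P.σ (2 * i))
        + (P.σ (2 * i) * P.σ (2 * i + 1)) * P.σ (2 * i) := by
      rw [P.cox_even i hi hr]
      noncomm_ring
    _ = _ := by
      rw [hσe.1, hσe.2, hs.1, hs.2, P.σ_even_mul_s hi hr, P.s_mul_σ_even hi hr,
        P.s_mul_e_mul_e hi hr, P.e_mul_e_mul_s hi hr, (P.mixed_odd i hi (by lia)).2]

theorem σ_even_conj_N_even (hi : 1 ≤ i) (hr : 2 * i + 2 ≤ r) :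
    P.σ (2 * i) * P.N (2 * i) * P.σ (2 * i) = P.N (2 * i)
      + P.e (2 * i - 1) * P.e (2 * i) + P.e (2 * i) * P.e (2 * i - 1)
      - P.L (2 * i) * P.e (2 * i) - P.e (2 * i) * P.L (2 * i) := by
  have hσe := P.σ_e_odd i (by lia) (by lia)
  have hmixed := P.mixed_odd i hi (by lia)
  have hσ_sq := P.σ_sq (2 * i + 1) (by lia) (by lia)
  have hsNs : P.s i * P.N (2 * i) * P.s i = P.σ (2 * i + 1) * P.N (2 * i) * P.σ (2 * i + 1)
      + P.σ (2 * i + 1) * P.e (2 * i - 1) * P.e (2 * i)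
      + P.e (2 * i) * P.e (2 * i - 1) * P.σ (2 * i + 1)
      - P.e (2 * i + 1) * P.e (2 * i) - P.e (2 * i) * P.e (2 * i + 1) := by
    linear_combination (norm := noncomm_ring) P.N_even_eq hi hr - P.cox_even i hi hr
      - hmixed.2 * P.e (2 * i + 1) * P.e (2 * i)
  calc P.σ (2 * i) * P.N (2 * i) * P.σ (2 * i)
      = P.σ (2 * i + 1) * (P.s i * P.N (2 * i) * P.s i) * P.σ (2 * i + 1) := by
        nth_rewrite 1 [← P.σ_odd_mul_s hi hr]
        rw [← P.s_mul_σ_odd hi hr]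
        simp only [mul_assoc]
    _ = (P.σ (2 * i + 1) * P.σ (2 * i + 1)) * P.N (2 * i) * (P.σ (2 * i + 1) * P.σ (2 * i + 1))
        + (P.σ (2 * i + 1) * P.σ (2 * i + 1)) * P.e (2 * i - 1) * (P.e (2 * i) * P.σ (2 * i + 1))
        + (P.σ (2 * i + 1) * P.e (2 * i)) * P.e (2 * i - 1) * (P.σ (2 * i + 1) * P.σ (2 * i + 1))
        - P.σ (2 * i + 1) * P.e (2 * i + 1) * (P.e (2 * i) * P.σ (2 * i + 1))
        - (P.σ (2 * i + 1) * P.e (2 * i)) * P.e (2 * i + 1) * P.σ (2 * i + 1) := by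
      rw [hsNs]
      noncomm_ring
    _ = _ := by
      simp only [hσ_sq, hσe.1, hσe.2, hmixed.1, hmixed.2, one_mul, mul_one]

theorem σ_odd_conj_N_odd (hi : 1 ≤ i) (hr : 2 * i + 2 ≤ r) :
    P.σ (2 * i + 1) * P.N (2 * i + 1) * P.σ (2 * i + 1) = P.N (2 * i + 1)
      + P.L (2 * i) * P.e (2 * i) + P.e (2 * i) * P.L (2 * i)
      - P.e (2 * i + 1) * P.e (2 * i) - P.e (2 * i) * P.e (2 * i + 1) := by
  have hs := P.σσ_s i (by lia) (by lia)
  have hσe := P.σ_e_odd i (by lia) (by lia)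
  calc P.σ (2 * i + 1) * P.N (2 * i + 1) * P.σ (2 * i + 1)
      = (P.σ (2 * i + 1) * P.s i) * P.N (2 * i - 1) * (P.s i * P.σ (2 * i + 1))
        - P.σ (2 * i + 1) * (P.L (2 * i) * (P.e (2 * i) * P.σ (2 * i + 1)))
        - (P.σ (2 * i + 1) * P.e (2 * i)) * P.L (2 * i) * P.σ (2 * i + 1)
        + (P.σ (2 * i + 1) * P.e (2 * i)) * P.L (2 * i) * P.e (2 * i - 1)
          * (P.e (2 * i) * P.σ (2 * i + 1))
        + (P.σ (2 * i + 1) * P.σ (2 * i)) * P.σ (2 * i + 1) := by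
        rw [P.N_odd_eq hi hr, ← P.s_conj_N_odd hi hr]
        noncomm_ring
    _ = P.σ (2 * i) * P.N (2 * i - 1) * P.σ (2 * i) - P.e (2 * i + 1) * P.e (2 * i)
        - P.e (2 * i) * P.e (2 * i + 1)
        + P.e (2 * i) * P.L (2 * i) * P.e (2 * i - 1) * P.e (2 * i) + P.σ (2 * i) := by
      rw [hσe.1, hσe.2, P.σ_odd_mul_s hi hr, P.s_mul_σ_odd hi hr, P.σ_odd_mul_L_mul_e hi hr,
        P.e_mul_L_mul_σ_odd hi hr, hs.2, P.s_mul_σ_odd hi hr]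
    _ = _ := by
      rw [P.N_odd_eq hi hr]
      abel

end Conjugation

section TwistedSwaps

theorem commute_e_mul_L_mul_e_pred_mul_e (hi : 1 ≤ i) (hr : 2 * i + 1 ≤ r) :
    Commute (P.e (2 * i) * P.L (2 * i) * P.e (2 * i - 1) * P.e (2 * i)) (P.N (2 * i - 1)) := by
  have hmixed := P.mixed_even i hi (by lia)
  have he_mul : P.e (2 * i - 1) * (P.N (2 * i - 1) + P.N (2 * i)) = 0 :=
    P.e_mul_N_add_N (by lia) (by lia) (by lia)
  have hmul_e : (P.N (2 * i - 1) + P.N (2 * i)) * P.e (2 * i - 1) = 0 :=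
    P.N_add_N_mul_e (by lia) (by lia) (by lia)
  have hcomm : Commute (P.e (2 * i)) (P.N (2 * i - 1)) :=
    P.e_comm_N _ _ (by lia) (by lia) (by lia) (by lia)
  rw [← Commute.neg_right_iff]
  refine commute_sandwich (b := P.N (2 * i)) (P.commute_L_sub_N _) hcomm.neg_right ?_ ?_ ?_
  · linear_combination (norm := noncomm_ring) -(he_mul * P.e (2 * i))
  · linear_combination (norm := noncomm_ring) -(P.e (2 * i) * hmul_e)
  · rw [← hmixed.2, mul_assoc _ (P.L _), ← hmixed.1]
    simp only [mul_assoc]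

theorem commute_e_mul_L_mul_e_succ_mul_e (hi : 1 ≤ i) (hr : 2 * i + 2 ≤ r) :
    Commute (P.e (2 * i) * P.L (2 * i) * P.e (2 * i + 1) * P.e (2 * i)) (P.N (2 * i + 2)) := by
  have hmixed := P.mixed_odd i hi (by lia)
  have he_mul : P.e (2 * i) * (P.N (2 * i) + P.N (2 * i + 1)) = 0 :=
    P.e_mul_N_add_N (by lia) rfl (by lia)
  have hmul_e : (P.N (2 * i) + P.N (2 * i + 1)) * P.e (2 * i) = 0 :=
    P.N_add_N_mul_e (by lia) rfl (by lia)
  have he_mul' : P.e (2 * i + 1) * (P.N (2 * i + 1) + P.N (2 * i + 2)) = 0 :=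
    P.e_mul_N_add_N (by lia) rfl (by lia)
  have hmul_e' : (P.N (2 * i + 1) + P.N (2 * i + 2)) * P.e (2 * i + 1) = 0 :=
    P.N_add_N_mul_e (by lia) rfl (by lia)
  have hcomm : Commute (P.e (2 * i)) (P.N (2 * i + 2)) :=
    P.e_comm_N _ _ (by lia) (by lia) (by lia) (by lia)
  refine commute_sandwich (b := P.N (2 * i)) (P.commute_L_sub_N _) hcomm ?_ ?_ ?_
  · linear_combination (norm := noncomm_ring) he_mul' * P.e (2 * i) - P.e (2 * i + 1) * hmul_e
  · linear_combination (norm := noncomm_ring) P.e (2 * i) * hmul_e' - he_mul * P.e (2 * i + 1)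
  · rw [← hmixed.2, mul_assoc _ (P.L _), ← hmixed.1]
    simp only [mul_assoc]

theorem isTwistedSwap_σ_even (hi : 1 ≤ i) (hr : 2 * i + 2 ≤ r) :
    IsTwistedSwap (P.σ (2 * i)) (P.N (2 * i - 1)) (P.N (2 * i)) (P.N (2 * i + 1))
      (P.e (2 * i)) (P.e (2 * i - 1)) (P.L (2 * i)) := by
  have hσ_sq := P.σ_sq (2 * i) (by lia) (by lia)
  have hσe := P.σ_e_even i (by lia) (by lia)
  have heLσ := P.e_mul_L_mul_σ_even hi (by lia)
  exact
    { commute_x_y := P.commute_N _ _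
      commute_x_z := P.commute_N _ _
      commute_y_z := P.commute_N _ _
      commute_ℓ_x := P.commute_L_N _ _
      commute_ℓ_y := P.commute_L_N _ _
      commute_ℓ_z := P.commute_L_N _ _
      commute_e_x := P.e_comm_N _ _ (by lia) (by lia) (by lia) (by lia)
      commute_f_z := P.e_comm_N _ _ (by lia) (by lia) (by lia) (by lia)
      e_mul_y_add_z := P.e_mul_N_add_N (by lia) rfl (by lia)
      f_mul_x_add_y := P.e_mul_N_add_N (by lia) (by lia) (by lia)
      x_add_y_mul_f := P.N_add_N_mul_e (by lia) (by lia) (by lia)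
      commute_eℓfe_x := P.commute_e_mul_L_mul_e_pred_mul_e hi (by lia)
      σ_mul_y := by
        linear_combination (norm := noncomm_ring) P.σ_even_conj_N_even hi hr * P.σ (2 * i)
          - P.σ (2 * i) * P.N (2 * i) * hσ_sq + P.e (2 * i - 1) * hσe.2
          + (P.mixed_even i hi (by lia)).2 - P.L (2 * i) * hσe.2 - heLσ
      σ_mul_z := by
        linear_combination (norm := noncomm_ring) P.σ (2 * i) * P.N_odd_eq hi hr
          + hσ_sq * P.N (2 * i - 1) * P.σ (2 * i) - P.σ_even_mul_L_mul_e hi (by lia)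
          - hσe.1 * P.L (2 * i) + hσe.1 * P.L (2 * i) * P.e (2 * i - 1) * P.e (2 * i) + hσ_sq
      z_mul_σ := by
        linear_combination (norm := noncomm_ring) P.N_odd_eq hi hr * P.σ (2 * i)
          + P.σ (2 * i) * P.N (2 * i - 1) * hσ_sq - P.L (2 * i) * hσe.2 - heLσ
          + P.e (2 * i) * P.L (2 * i) * P.e (2 * i - 1) * hσe.2 + hσ_sq }

/-- The relations for `σ_{2i+1}` are those for `σ_{2i}` with `N_k` replaced by `N_{4i+1-k}` and
`e_k` by `e_{4i-k}`, at the cost of a sign. -/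
theorem isTwistedSwap_neg_σ_odd (hi : 1 ≤ i) (hr : 2 * i + 2 ≤ r) :
    IsTwistedSwap (-P.σ (2 * i + 1)) (P.N (2 * i + 2)) (P.N (2 * i + 1)) (P.N (2 * i))
      (P.e (2 * i)) (P.e (2 * i + 1)) (P.L (2 * i)) := by
  have hσ_sq := P.σ_sq (2 * i + 1) (by lia) (by lia)
  have hσe := P.σ_e_odd i (by lia) (by lia)
  have hmixed := P.mixed_odd i hi (by lia)
  exact
    { commute_x_y := P.commute_N _ _
      commute_x_z := P.commute_N _ _
      commute_y_z := P.commute_N _ _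
      commute_ℓ_x := P.commute_L_N _ _
      commute_ℓ_y := P.commute_L_N _ _
      commute_ℓ_z := P.commute_L_N _ _
      commute_e_x := P.e_comm_N _ _ (by lia) (by lia) (by lia) (by lia)
      commute_f_z := P.e_comm_N _ _ (by lia) (by lia) (by lia) (by lia)
      e_mul_y_add_z := by rw [add_comm (P.N _), P.e_mul_N_add_N (by lia) rfl (by lia)]
      f_mul_x_add_y := by rw [add_comm (P.N _), P.e_mul_N_add_N (by lia) rfl (by lia)]
      x_add_y_mul_f := by rw [add_comm (P.N _), P.N_add_N_mul_e (by lia) rfl (by lia)]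
      commute_eℓfe_x := P.commute_e_mul_L_mul_e_succ_mul_e hi hr
      σ_mul_y := by
        linear_combination (norm := noncomm_ring) -(P.σ_odd_conj_N_odd hi hr * P.σ (2 * i + 1))
          + P.σ (2 * i + 1) * P.N (2 * i + 1) * hσ_sq - P.L (2 * i) * hσe.2
          - P.e_mul_L_mul_σ_odd hi hr + P.e (2 * i + 1) * hσe.2 + hmixed.2
      σ_mul_z := by
        linear_combination (norm := noncomm_ring) P.N_even_eq hi hr * P.σ (2 * i + 1)
          + P.σ (2 * i + 1) * P.N (2 * i) * hσ_sq - P.e (2 * i + 1) * hσe.2 - hmixed.2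
          + P.e (2 * i) * P.L (2 * i) * P.e (2 * i + 1) * hσe.2 + hσ_sq
      z_mul_σ := by
        linear_combination (norm := noncomm_ring) P.σ (2 * i + 1) * P.N_even_eq hi hr
          + hσ_sq * P.N (2 * i) * P.σ (2 * i + 1) - hmixed.1 - hσe.1 * P.e (2 * i + 1)
          + hσe.1 * P.L (2 * i) * P.e (2 * i + 1) * P.e (2 * i) + hσ_sq }

end TwistedSwaps

section SupersymmetricPolynomials

variable {φ : MvPolynomial ℕ ℂ →ₐ[ℂ] A} {p : MvPolynomial ℕ ℂ}

theorem commute_e_map (hφ : ∀ i, φ (X i) = P.N i) (hp : IsSupersymmetric r p) (hj : 1 ≤ j)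
    (hjr : j + 1 ≤ r) : Commute (P.e j) (φ p) := by
  refine (hp.cancelsAt (j := j) (k := j + 1) ⟨by lia, by lia⟩ ⟨by lia, by lia⟩ (by lia)).commute_map
    (fun i hij hij' => ?_) ?_ ?_
  · rw [hφ]
    exact P.e_comm_N j i hj (by lia) hij hij'
  · rw [map_add, hφ, hφ, P.e_mul_N_add_N hj rfl hjr]
  · rw [map_add, hφ, hφ, P.N_add_N_mul_e hj rfl hjr]

theorem commute_σ_even_map (hφ : ∀ i, φ (X i) = P.N i) (hp : IsSupersymmetric r p) (hi : 1 ≤ i)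
    (hr : 2 * i + 2 ≤ r) : Commute (P.σ (2 * i)) (φ p) := by
  have hswap := P.isTwistedSwap_σ_even hi hr
  refine (hp.cancelsAt (j := 2 * i - 1) (k := 2 * i) ⟨by lia, by lia⟩ ⟨by lia, by lia⟩
    (by lia)).commute_map_of_rename_swap_eq (l := 2 * i + 1) (by lia) (by lia) (by lia)
    (hp.rename_swap ⟨by lia, by lia⟩ ⟨by lia, by lia⟩ (by lia)) (fun j hj₁ hj₂ hj₃ => ?_) ?_ ?_ ?_
  · rw [hφ]
    exact P.σeven_comm_N i j (by lia) (by lia) hj₁ hj₂ hj₃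
  · simpa only [map_add, hφ] using hswap.commute_add_add
  · simpa only [map_add, map_mul, hφ] using hswap.commute_mul
  · simpa only [map_add, map_mul, hφ] using hswap.commute_y_mul_mul

theorem commute_σ_odd_map (hφ : ∀ i, φ (X i) = P.N i) (hp : IsSupersymmetric r p) (hi : 1 ≤ i)
    (hr : 2 * i + 2 ≤ r) : Commute (P.σ (2 * i + 1)) (φ p) := by
  have hswap := P.isTwistedSwap_neg_σ_odd hi hr
  rw [← Commute.neg_left_iff]
  refine (hp.cancelsAt (j := 2 * i + 2) (k := 2 * i + 1) ⟨by lia, by lia⟩ ⟨by lia, by lia⟩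
    (by lia)).commute_map_of_rename_swap_eq (l := 2 * i) (by lia) (by lia) (by lia)
    (hp.rename_swap ⟨by lia, by lia⟩ ⟨by lia, by lia⟩ (by lia)) (fun j hj₁ hj₂ hj₃ => ?_) ?_ ?_ ?_
  · rw [hφ, Commute.neg_left_iff]
    exact P.σodd_comm_N i j (by lia) (by lia) hj₃ hj₂ hj₁
  · simpa only [map_add, hφ] using hswap.commute_add_add
  · simpa only [map_add, map_mul, hφ] using hswap.commute_mul
  · simpa only [map_add, map_mul, hφ] using hswap.commute_y_mul_mul

theorem commute_s_map (hφ : ∀ i, φ (X i) = P.N i) (hp : IsSupersymmetric r p) (hi : 1 ≤ i)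
    (hr : 2 * i + 2 ≤ r) : Commute (P.s i) (φ p) := by
  rw [← (P.σσ_s i (by lia) (by lia)).1]
  exact (P.commute_σ_even_map hφ hp hi hr).mul_left (P.commute_σ_odd_map hφ hp hi hr)

end SupersymmetricPolynomials

end PartitionAlgebraData

/-- Every supersymmetric polynomial in the normalised Jucys–Murphy elements
`N₁,…,N_r` lies in the center of the partition algebra `A_r(δ)`, for arbitrary
`δ ∈ ℂ`. -/
theorem supersymmetric_in_JM_is_central
    {A : Type*} [Ring A] [Algebra ℂ A] (δ : ℂ) (r : ℕ)
    (P : PartitionAlgebraData A δ r)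
    (p : MvPolynomial ℕ ℂ) (hp : IsSupersymmetric r p) :
    mvEvalAt P.N p ∈ Subalgebra.center ℂ A := by
  obtain ⟨φ, hφ⟩ := exists_algHom_map_X (R := ℂ) P.commute_N
  rw [mvEvalAt_eq_map hφ, Subalgebra.mem_center_iff]
  suffices htop : ⊤ ≤ Subalgebra.centralizer ℂ {φ p} from fun a =>
    ((Subalgebra.mem_centralizer_iff ℂ).1 (htop (Algebra.mem_top (x := a))) _ rfl).symm
  rw [← P.gen]
  refine Algebra.adjoin_le ?_
  rintro _ (⟨i, hi, hir, rfl⟩ | ⟨i, hi, hir, rfl⟩) <;>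
    simp only [SetLike.mem_coe, Subalgebra.mem_centralizer_iff, Set.mem_singleton_iff, forall_eq]
  · exact (P.commute_e_map hφ hp hi (by lia)).eq.symm
  · exact (P.commute_s_map hφ hp hi (by lia)).eq.symm
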